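/- Let Z = Z_1 Z_2 Z_3 ··· be an infinite binary sequence where, for each n ≥ 1, Z_n is a binary string of length n·2^n in which every binary string of length n occurs exactly once at a starting position divisible by n (i.e., Z_n is an enumeration of all binary strings of length n in aligned blocks). Then Z is normal: for every nonempty binary string w, the limit as m → ∞ of occ(w, Z↾m)/m equals 2^{−|w|}. -/

import Mathlib

/-- `occ w x`: the number of indices `i` with `x[i..i+|w|-1] = w`,
i.e. the number of occurrences of `w` as a substring of `x`. -/
def occ (w x : List Bool) : ℕ :=
  ((List.range (x.length + 1 - w.length)).filter
    (fun i => decide ((x.drop i).take w.length = w))).length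

/-- `occB w x`: the number of occurrences of `w` as a substring of `x`
starting at a position divisible by `|w|` (aligned block occurrences). -/
def occB (w x : List Bool) : ℕ :=
  ((List.range (x.length + 1 - w.length)).filter
    (fun i => decide (i % w.length = 0) && decide ((x.drop i).take w.length = w))).length

/-- `x` is a de Bruijn string of order `n`: it has length `2^n` and every binary
string of length `n` occurs exactly once as a substring of `x ++ x[0..n-2]`. -/
def IsDeBruijn (n : ℕ) (x : List Bool) : Prop :=
  x.length = 2 ^ n ∧ ∀ w : List Bool, w.length = n → occ w (x ++ x.take (n - 1)) = 1

open Classical in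
/-- `db n` is the lexicographically least de Bruijn string of order `n`
(using the lexicographic order on `List Bool`, with `false < true`);
`[]` if none exists. -/
noncomputable def db (n : ℕ) : List Bool :=
  if h : ∃ x : List Bool, IsDeBruijn n x ∧ ∀ y, IsDeBruijn n y → x ≤ y then h.choose else []

/-- The block `B_{n,i} = db_i(n)^t`: `t` copies of the cyclic left shift of `db n` by `i`. -/
noncomputable def Bblk (n t i : ℕ) : List Bool := (List.replicate t ((db n).rotate i)).flatten

/-- The odd part `t` of `n = 2^s * t`. -/
def oddPart (n : ℕ) : ℕ := n / 2 ^ (n.factorization 2)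

/-- `Sblk n` is the string `S_n = B_{n,0} B_{n,1} ⋯ B_{n,2^s-1}` where `n = 2^s * t`, `t` odd. -/
noncomputable def Sblk (n : ℕ) : List Bool :=
  ((List.range (2 ^ (n.factorization 2))).map (fun i => Bblk n (oddPart n) i)).flatten

/-- `Sfin m = S_1 S_2 ⋯ S_m`. -/
noncomputable def Sfin (m : ℕ) : List Bool := ((List.range m).map (fun k => Sblk (k + 1))).flatten

/-- The infinite sequence `S = S_1 S_2 S_3 ⋯`, as a function giving its `i`-th bit. -/
noncomputable def Sseq (i : ℕ) : Bool := (Sfin (i + 1)).getD i false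

/-- For odd `n`, `S_n = db(n)^n`. -/
noncomputable def Sodd (n : ℕ) : List Bool := (List.replicate n (db n)).flatten

open Asymptotics Filter Finset Function
open scoped BigOperators Topology

/-!
Call a function of the `k` letters of a factor centred if its mean over all words of length `k` is
zero. Over a uniformly random word of length `N`, the values of a centred function at two windows
which do not overlap are uncorrelated, so its sum over all windows has second moment `O(N)`, hence
absolute mean `O(√N)`. Stage `N` of the sequence lists every word of length `N` exactly once, so
the absolute values of these sums, added up over any set of blocks of that stage, amount to at
most `2 ^ N * O(√N)`, which is negligible against the length `N * 2 ^ N` of the stage. This holds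
whatever the order of the words, and therefore controls prefixes ending inside a stage as well;
factors straddling two blocks cost `O(k)` per block. Normality is the case of a centred indicator.
-/

section Expectation

variable {α ι κ κ' Ω T : Type*} [Fintype α] [Nonempty α] [Fintype ι] [DecidableEq ι] [Fintype κ]
  [DecidableEq κ] [Fintype κ'] [DecidableEq κ'] [Fintype Ω] [Nonempty Ω] [Fintype T]

lemma expect_comp_injective {e : κ → ι} (he : Injective e) (F : (κ → α) → ℝ) :
    𝔼 v : ι → α, F (v ∘ e) = 𝔼 x, F x := by
  classical
  let split : κ ⊕ ↥(Set.range e)ᶜ ≃ ι :=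
    ((Equiv.ofInjective e he).sumCongr (Equiv.refl _)).trans (Equiv.Set.sumCompl (Set.range e))
  let splitFun : (ι → α) ≃ (κ → α) × (↥(Set.range e)ᶜ → α) :=
    (split.symm.arrowCongr (Equiv.refl α)).trans (Equiv.sumArrowEquivProdArrow _ _ _)
  calc 𝔼 v : ι → α, F (v ∘ e) = 𝔼 p : (κ → α) × (↥(Set.range e)ᶜ → α), F p.1 :=
        Fintype.expect_equiv splitFun _ _ fun _ => rfl
    _ = 𝔼 x : κ → α, 𝔼 _y : ↥(Set.range e)ᶜ → α, F x := by
        rw [← univ_product_univ, expect_product]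
    _ = 𝔼 x, F x := by simp only [Fintype.expect_const]

lemma expect_comp_mul_comp {e : κ → ι} {e' : κ' → ι} (he : Injective e) (he' : Injective e')
    (hdisj : ∀ i j, e i ≠ e' j) (F : (κ → α) → ℝ) (G : (κ' → α) → ℝ) :
    𝔼 v : ι → α, F (v ∘ e) * G (v ∘ e') = (𝔼 x, F x) * 𝔼 y, G y :=
  calc 𝔼 v : ι → α, F (v ∘ e) * G (v ∘ e') = 𝔼 z : κ ⊕ κ' → α, F (z ∘ Sum.inl) * G (z ∘ Sum.inr) :=
        expect_comp_injective (he.sumElim he' hdisj) fun z => F (z ∘ Sum.inl) * G (z ∘ Sum.inr)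
    _ = 𝔼 p : (κ → α) × (κ' → α), F p.1 * G p.2 :=
        Fintype.expect_equiv (Equiv.sumArrowEquivProdArrow _ _ _) _ _ fun _ => rfl
    _ = (𝔼 x, F x) * 𝔼 y, G y := by
        rw [← univ_product_univ, expect_product, Fintype.expect_mul_expect]

open Classical in
lemma expect_sq_sum_le {X : T → Ω → ℝ} (hX : ∀ t ω, |X t ω| ≤ 1) {d : ℕ}
    (hd : ∀ s, #{t | 𝔼 ω, X s ω * X t ω ≠ 0} ≤ d) :
    𝔼 ω, (∑ t, X t ω) ^ 2 ≤ Fintype.card T * d := by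
  have hle (s t : T) : 𝔼 ω, X s ω * X t ω ≤ 1 :=
    expect_le univ_nonempty fun ω _ => (le_abs_self _).trans <|
      abs_mul (X s ω) (X t ω) ▸ mul_le_one₀ (hX s ω) (abs_nonneg _) (hX t ω)
  have hrow (s : T) : ∑ t, 𝔼 ω, X s ω * X t ω ≤ d :=
    calc ∑ t, 𝔼 ω, X s ω * X t ω = ∑ t with 𝔼 ω, X s ω * X t ω ≠ 0, 𝔼 ω, X s ω * X t ω :=
          (sum_filter_ne_zero _).symm
      _ ≤ #{t | 𝔼 ω, X s ω * X t ω ≠ 0} := by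
          simpa using sum_le_card_nsmul _ _ 1 fun t _ => hle s t
      _ ≤ d := by exact_mod_cast hd s
  calc 𝔼 ω, (∑ t, X t ω) ^ 2 = ∑ s, ∑ t, 𝔼 ω, X s ω * X t ω := by
        simp only [sq, sum_mul_sum, expect_sum_comm]
    _ ≤ Fintype.card T * d := by simpa using sum_le_card_nsmul univ _ (d : ℝ) fun s _ => hrow s

lemma expect_abs_le_sqrt (X : Ω → ℝ) : 𝔼 ω, |X ω| ≤ √(𝔼 ω, X ω ^ 2) :=
  Real.le_sqrt_of_sq_le <| by simpa using expect_mul_sq_le_sq_mul_sq univ (fun ω => |X ω|) 1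

end Expectation

section Factors

variable {α : Type*} {k N : ℕ}

/-- The factor of length `k` of the infinite sequence `Z` at position `i`. -/
def factor (Z : ℕ → α) (k i : ℕ) : Fin k → α := fun j => Z (i + j)

/-- The window of positions `t, …, t + k - 1` in a word of length `N`, so that `v ∘ windowPos t` is
the factor of `v` at `t`. The offset `t` ranges over `Fin (N - k)`: the last window is left out, so
that there are at most `N` of them even for `k = 0`. -/
def windowPos (t : Fin (N - k)) (j : Fin k) : Fin N := ⟨t + j, by lia⟩

lemma windowPos_injective (t : Fin (N - k)) : Injective (windowPos t) := fun i j h => by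
  simpa [windowPos, Fin.ext_iff] using h

lemma factor_comp_windowPos (Z : ℕ → α) (a : ℕ) (t : Fin (N - k)) :
    factor Z N a ∘ windowPos t = factor Z k (a + t) := by
  funext j
  simp [factor, windowPos, add_assoc]

variable [Fintype α] [Nonempty α] {f : (Fin k → α) → ℝ}

lemma expect_windowPos_mul_eq_zero (hmean : 𝔼 x, f x = 0) {s t : Fin (N - k)}
    (hst : (s + k : ℕ) ≤ t ∨ (t + k : ℕ) ≤ s) :
    𝔼 v : Fin N → α, f (v ∘ windowPos s) * f (v ∘ windowPos t) = 0 := by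
  have hdisj (i j : Fin k) : windowPos s i ≠ windowPos t j := by
    simp only [windowPos, ne_eq, Fin.mk.injEq]
    lia
  rw [expect_comp_mul_comp (windowPos_injective s) (windowPos_injective t) hdisj, hmean, zero_mul]

lemma expect_abs_sum_windowPos_le (hmean : 𝔼 x, f x = 0) (hf : ∀ x, |f x| ≤ 1) :
    𝔼 v : Fin N → α, |∑ t : Fin (N - k), f (v ∘ windowPos t)| ≤ √(N * (2 * k : ℕ)) := by
  classical
  have hcorr (s : Fin (N - k)) :
      #{t : Fin (N - k) | 𝔼 v : Fin N → α, f (v ∘ windowPos s) * f (v ∘ windowPos t) ≠ 0}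
        ≤ 2 * k :=
    calc _ ≤ #(Ico (s - k : ℕ) (s + k)) := by
          refine card_le_card_of_injOn Fin.val (fun t ht => ?_) Fin.val_injective.injOn
          have := mt (expect_windowPos_mul_eq_zero (s := s) (t := t) hmean) (by simpa using ht)
          simp only [coe_Ico, Set.mem_Ico]
          lia
      _ ≤ 2 * k := by rw [Nat.card_Ico]; lia
  refine (expect_abs_le_sqrt _).trans (Real.sqrt_le_sqrt ?_)
  calc 𝔼 v : Fin N → α, (∑ t : Fin (N - k), f (v ∘ windowPos t)) ^ 2
      ≤ Fintype.card (Fin (N - k)) * (2 * k : ℕ) :=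
        expect_sq_sum_le (X := fun t v => f (v ∘ windowPos t)) (fun t v => hf _) hcorr
    _ ≤ N * (2 * k : ℕ) := by
        rw [Fintype.card_fin]
        gcongr
        exact N.sub_le k

end Factors

section Stages

lemma abs_sum_range_sub_le {c : ℕ → ℝ} (hc : ∀ i, |c i| ≤ 1) {a b : ℕ} (hab : a ≤ b) :
    |∑ i ∈ range b, c i - ∑ i ∈ range a, c i| ≤ b - a := by
  rw [← sum_Ico_eq_sub _ hab]
  calc |∑ i ∈ Ico a b, c i| ≤ ∑ i ∈ Ico a b, |c i| := abs_sum_le_sum_abs _ _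
    _ ≤ #(Ico a b) := by simpa only [nsmul_one] using sum_le_card_nsmul _ _ 1 fun i _ => hc i
    _ = b - a := by rw [Nat.card_Ico, Nat.cast_sub hab]

lemma abs_sum_range_add_mul_le (c : ℕ → ℝ) (a J L : ℕ) :
    |∑ i ∈ range (a + J * L), c i|
      ≤ |∑ i ∈ range a, c i| + ∑ j ∈ range J, |∑ t ∈ range L, c (a + j * L + t)| := by
  induction J with
  | zero => simp
  | succ J ih =>
    rw [show a + (J + 1) * L = a + J * L + L by ring, sum_range_add, sum_range_succ, ← add_assoc]
    exact (abs_add_le _ _).trans (by gcongr)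

/-- Lengths and multiplicities `ℓ, b` describe a sequence cut into consecutive stages, the `r`-th of
which consists of `b r` blocks of length `ℓ r`; this is the position at which stage `n` starts. -/
def stageStart (ℓ b : ℕ → ℕ) (n : ℕ) : ℕ := ∑ r ∈ range n, b r * ℓ r

/-- The sum over the blocks of stage `n` of the absolute value of the sum of `c` over the block. -/
noncomputable def stageDeviation (ℓ b : ℕ → ℕ) (c : ℕ → ℝ) (n : ℕ) : ℝ :=
  ∑ j ∈ range (b n), |∑ t ∈ range (ℓ n), c (stageStart ℓ b n + j * ℓ n + t)|

variable {ℓ b : ℕ → ℕ} {c : ℕ → ℝ}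

lemma stageStart_succ (ℓ b : ℕ → ℕ) (n : ℕ) :
    stageStart ℓ b (n + 1) = stageStart ℓ b n + b n * ℓ n :=
  sum_range_succ _ _

lemma monotone_stageStart (ℓ b : ℕ → ℕ) : Monotone (stageStart ℓ b) :=
  monotone_nat_of_le_succ fun n => by simp [stageStart_succ]

lemma stageDeviation_nonneg (ℓ b : ℕ → ℕ) (c : ℕ → ℝ) (n : ℕ) : 0 ≤ stageDeviation ℓ b c n :=
  sum_nonneg fun _ _ => abs_nonneg _

lemma abs_sum_range_stageStart_le (ℓ b : ℕ → ℕ) (c : ℕ → ℝ) (n : ℕ) :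
    |∑ i ∈ range (stageStart ℓ b n), c i| ≤ ∑ r ∈ range n, stageDeviation ℓ b c r := by
  induction n with
  | zero => simp [stageStart]
  | succ n ih =>
    rw [stageStart_succ, sum_range_succ]
    exact (abs_sum_range_add_mul_le c _ _ _).trans (add_le_add_left ih _)

lemma abs_sum_range_le_of_mem_stage (hc : ∀ i, |c i| ≤ 1) {n m : ℕ} (hnm : stageStart ℓ b n ≤ m)
    (hmn : m < stageStart ℓ b (n + 1)) :
    |∑ i ∈ range m, c i| ≤ ∑ r ∈ range (n + 1), stageDeviation ℓ b c r + ℓ n := by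
  rw [stageStart_succ] at hmn
  have hpos : 0 < ℓ n := Nat.pos_of_ne_zero fun h => by simp [h] at hmn; lia
  set a := stageStart ℓ b n
  set J := (m - a) / ℓ n
  have hJ : J ≤ b n := Nat.div_le_of_le_mul (by rw [mul_comm]; lia)
  have hdiv : J * ℓ n + (m - a) % ℓ n = m - a := Nat.div_add_mod' _ _
  have hmod : (m - a) % ℓ n < ℓ n := Nat.mod_lt _ hpos
  have htail : |∑ i ∈ range m, c i - ∑ i ∈ range (a + J * ℓ n), c i| ≤ ℓ n := by
    refine (abs_sum_range_sub_le hc (by lia)).trans ?_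
    rw [sub_le_iff_le_add]
    exact_mod_cast (by lia : m ≤ ℓ n + (a + J * ℓ n))
  have hblocks : |∑ i ∈ range (a + J * ℓ n), c i|
      ≤ ∑ r ∈ range (n + 1), stageDeviation ℓ b c r := by
    refine (abs_sum_range_add_mul_le c a J (ℓ n)).trans ?_
    rw [sum_range_succ]
    exact add_le_add (abs_sum_range_stageStart_le ℓ b c n) <|
      sum_le_sum_of_subset_of_nonneg (range_subset_range.2 hJ) fun _ _ _ => abs_nonneg _
  linarith [abs_sub_abs_le_abs_sub (∑ i ∈ range m, c i) (∑ i ∈ range (a + J * ℓ n), c i)]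

lemma isLittleO_natCast_of_forall_Ico {S : ℕ → ℕ} (hmono : Monotone S) (hS : Tendsto S atTop atTop)
    {g E : ℕ → ℝ} (hgE : ∀ n m, S n ≤ m → m < S (n + 1) → |g m| ≤ E n)
    (hE : E =o[atTop] fun n => (S n : ℝ)) : g =o[atTop] fun m => (m : ℝ) := by
  refine isLittleO_iff.2 fun ε hε => ?_
  obtain ⟨n₀, hn₀⟩ := eventually_atTop.1 (isLittleO_iff.1 hE hε)
  have hunbdd : ¬BddAbove (S '' Set.Ici n₀) := fun ⟨B, hB⟩ => by
    obtain ⟨n, hBn, hn⟩ := ((hS.eventually_gt_atTop B).and (eventually_ge_atTop n₀)).exists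
    exact hBn.not_ge (hB ⟨n, hn, rfl⟩)
  filter_upwards [eventually_ge_atTop (S n₀)] with m hm
  rw [← Set.mem_Ici, ← biUnion_Ici_Ico_map_succ (fun i hi => hmono hi) hunbdd] at hm
  obtain ⟨n, hn, hnm, hmn⟩ := Set.mem_iUnion₂.1 hm
  calc ‖g m‖ ≤ E n := hgE n m hnm hmn
    _ ≤ ‖E n‖ := le_abs_self _
    _ ≤ ε * ‖(S n : ℝ)‖ := hn₀ n hn
    _ ≤ ε * ‖(m : ℝ)‖ := by simpa using by gcongr

theorem isLittleO_sum_range_of_stageDeviation (hc : ∀ i, |c i| ≤ 1) (hb : Tendsto b atTop atTop)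
    (hS : Tendsto (stageStart ℓ b) atTop atTop)
    (hgrowth : (fun n => (b n * ℓ n : ℝ)) =O[atTop] fun n => (stageStart ℓ b n : ℝ))
    (hdev : stageDeviation ℓ b c =o[atTop] fun n => (b n * ℓ n : ℝ)) :
    (fun m => ∑ i ∈ range m, c i) =o[atTop] fun m => (m : ℝ) := by
  have hcast (n : ℕ) : ∑ r ∈ range n, (b r * ℓ r : ℝ) = stageStart ℓ b n := by simp [stageStart]
  have hsum : (fun n => ∑ r ∈ range n, stageDeviation ℓ b c r) =o[atTop]
      fun n => (stageStart ℓ b n : ℝ) := by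
    simpa only [hcast] using hdev.sum_range (fun n => by positivity)
      ((tendsto_natCast_atTop_atTop.comp hS).congr fun n => (hcast n).symm)
  have hsucc : (fun n => (stageStart ℓ b (n + 1) : ℝ)) =O[atTop]
      fun n => (stageStart ℓ b n : ℝ) := by
    simpa [stageStart_succ] using (isBigO_refl _ _).add hgrowth
  have hlen : (fun n => (ℓ n : ℝ)) =o[atTop] fun n => (b n * ℓ n : ℝ) := by
    have hone : (fun _ => (1 : ℝ)) =o[atTop] fun n => (b n : ℝ) :=
      (isLittleO_const_id_atTop 1).comp_tendsto (tendsto_natCast_atTop_atTop.comp hb)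
    simpa using hone.mul_isBigO (isBigO_refl (fun n => (ℓ n : ℝ)) atTop)
  refine isLittleO_natCast_of_forall_Ico (monotone_stageStart ℓ b) hS
    (fun n m => abs_sum_range_le_of_mem_stage hc) ?_
  exact ((hsum.comp_tendsto (tendsto_add_atTop_nat 1)).trans_isBigO hsucc).add
    (hlen.trans_isBigO hgrowth)

end Stages

section BlockEnumeration

variable {α : Type*} {k : ℕ} {Z : ℕ → α} {f : (Fin k → α) → ℝ}

lemma abs_sum_factor_block_le (hf : ∀ x, |f x| ≤ 1) (Z : ℕ → α) (N a : ℕ) :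
    |∑ t ∈ range N, f (factor Z k (a + t))|
      ≤ |∑ t : Fin (N - k), f (factor Z N a ∘ windowPos t)| + k := by
  have htail := abs_sum_range_sub_le (c := fun t => f (factor Z k (a + t))) (fun _ => hf _)
    (N.sub_le k)
  have hk : (N : ℝ) - (N - k : ℕ) ≤ k := by
    rw [sub_le_iff_le_add]
    exact_mod_cast (by lia : N ≤ k + (N - k))
  simp only [factor_comp_windowPos, ← sum_range fun t => f (factor Z k (a + t))]
  linarith [abs_sub_abs_le_abs_sub (∑ t ∈ range N, f (factor Z k (a + t)))
    (∑ t ∈ range (N - k), f (factor Z k (a + t)))]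

variable [Fintype α]

/-- `Z` is the concatenation over `n` of enumerations of all words of length `n` in aligned blocks,
in arbitrary order: for each `n ≥ 1`, every word of length `n` is exactly one of the
`card α ^ n` blocks of stage `n`. The stage `n = 0` is empty and is allowed for uniformity. -/
def IsBlockEnumeration (Z : ℕ → α) : Prop :=
  ∀ n, 1 ≤ n → Bijective fun j : Fin (Fintype.card α ^ n) =>
    factor Z n (stageStart id (Fintype.card α ^ ·) n + j * n)

lemma sum_abs_block_le [Nonempty α] (hmean : 𝔼 x, f x = 0) (hf : ∀ x, |f x| ≤ 1) {a B N : ℕ}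
    (hbij : Bijective fun j : Fin B => factor Z N (a + j * N)) :
    ∑ j ∈ range B, |∑ t ∈ range N, f (factor Z k (a + j * N + t))|
      ≤ B * (√(N * (2 * k : ℕ)) + k) := by
  have hcard : (B : ℝ) = Fintype.card (Fin N → α) := by
    rw [← Fintype.card_of_bijective hbij, Fintype.card_fin]
  calc ∑ j ∈ range B, |∑ t ∈ range N, f (factor Z k (a + j * N + t))|
      ≤ ∑ j : Fin B, (|∑ t : Fin (N - k), f (factor Z N (a + j * N) ∘ windowPos t)| + k) := by
        rw [sum_range]
        exact sum_le_sum fun j _ => abs_sum_factor_block_le hf Z N _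
    _ = ∑ v : Fin N → α, |∑ t : Fin (N - k), f (v ∘ windowPos t)| + B * k := by
        rw [sum_add_distrib, hbij.sum_comp fun v => |∑ t : Fin (N - k), f (v ∘ windowPos t)|]
        simp
    _ = B * (𝔼 v : Fin N → α, |∑ t : Fin (N - k), f (v ∘ windowPos t)| + k) := by
        rw [mul_add, hcard, Fintype.card_mul_expect]
    _ ≤ B * (√(N * (2 * k : ℕ)) + k) := by
        gcongr
        exact expect_abs_sum_windowPos_le hmean hf

lemma isLittleO_sqrt_id : (fun x : ℝ => √x) =o[atTop] fun x => x := by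
  have hone : (fun _ => (1 : ℝ)) =o[atTop] fun x : ℝ => √x :=
    (isLittleO_const_id_atTop 1).comp_tendsto Real.tendsto_sqrt_atTop
  refine (hone.mul_isBigO (isBigO_refl (fun x : ℝ => √x) atTop)).congr' (by simp) ?_
  filter_upwards [eventually_ge_atTop 0] with x hx using Real.mul_self_sqrt hx

lemma isLittleO_sqrt_mul_add_const (C D : ℝ) :
    (fun n : ℕ => √(n * C) + D) =o[atTop] fun n => (n : ℝ) := by
  have hsqrt : (fun n : ℕ => √(n * C)) =o[atTop] fun n => (n : ℝ) := by
    refine ((isLittleO_sqrt_id.comp_tendsto tendsto_natCast_atTop_atTop).const_mul_left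
      (√C)).congr_left fun n => ?_
    rw [comp_apply, mul_comm, Real.sqrt_mul n.cast_nonneg]
  exact hsqrt.add ((isLittleO_const_id_atTop D).comp_tendsto tendsto_natCast_atTop_atTop)

lemma isLittleO_stageDeviation [Nonempty α] (hZ : IsBlockEnumeration Z) (hmean : 𝔼 x, f x = 0)
    (hf : ∀ x, |f x| ≤ 1) :
    stageDeviation id (Fintype.card α ^ ·) (fun i => f (factor Z k i)) =o[atTop]
      fun n => ((Fintype.card α ^ n : ℕ) * (id n : ℕ) : ℝ) := by
  refine IsBigO.trans_isLittleO (.of_norm_eventuallyLE ?_) <|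
    (isBigO_refl (fun n => ((Fintype.card α ^ n : ℕ) : ℝ)) atTop).mul_isLittleO
      (isLittleO_sqrt_mul_add_const (2 * k : ℕ) k)
  filter_upwards [eventually_ge_atTop 1] with n hn
  rw [Real.norm_of_nonneg (stageDeviation_nonneg _ _ _ n)]
  exact sum_abs_block_le hmean hf (hZ n hn)

lemma pow_mul_le_stageStart (q : ℕ) {n : ℕ} (hn : 2 ≤ n) :
    q ^ n * n ≤ 2 * q * stageStart id (q ^ ·) n := by
  obtain ⟨n, rfl⟩ := Nat.exists_eq_add_of_le' hn
  calc q ^ (n + 2) * (n + 2) ≤ q ^ (n + 2) * (2 * (n + 1)) := by gcongr; lia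
    _ = 2 * q * (q ^ (n + 1) * (n + 1)) := by ring
    _ ≤ 2 * q * stageStart id (q ^ ·) (n + 2) := by
        gcongr
        simp [stageStart_succ _ _ (n + 1)]

lemma le_stageStart_succ {q : ℕ} (hq : 1 ≤ q) (n : ℕ) : n ≤ stageStart id (q ^ ·) (n + 1) := by
  rw [stageStart_succ]
  exact (Nat.le_mul_of_pos_left n (Nat.pow_pos hq)).trans (Nat.le_add_left _ _)

theorem IsBlockEnumeration.isLittleO_sum_factor [Nontrivial α] (hZ : IsBlockEnumeration Z)
    (hmean : 𝔼 x, f x = 0) (hf : ∀ x, |f x| ≤ 1) :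
    (fun m => ∑ i ∈ range m, f (factor Z k i)) =o[atTop] fun m => (m : ℝ) := by
  have hq : 1 < Fintype.card α := Fintype.one_lt_card
  refine isLittleO_sum_range_of_stageDeviation (fun i => hf _)
    (tendsto_pow_atTop_atTop_of_one_lt hq) ?_ ?_ (isLittleO_stageDeviation hZ hmean hf)
  · exact (tendsto_add_atTop_iff_nat 1).1 (tendsto_atTop_mono (le_stageStart_succ hq.le) tendsto_id)
  · refine .of_bound (2 * Fintype.card α : ℕ) ?_
    filter_upwards [eventually_ge_atTop 2] with n hn
    rw [← Nat.cast_mul, Real.norm_natCast, Real.norm_natCast]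
    exact_mod_cast pow_mul_le_stageStart _ hn

lemma expect_indicator_sub_inv_card {X : Type*} [Fintype X] [DecidableEq X] (a : X) :
    𝔼 x, ((if x = a then 1 else 0) - (Fintype.card X : ℝ)⁻¹) = 0 := by
  have : Nonempty X := ⟨a⟩
  simp [expect_sub_distrib]

lemma abs_indicator_sub_inv_card_le_one {X : Type*} [Fintype X] [DecidableEq X] (a x : X) :
    |(if x = a then 1 else 0) - (Fintype.card X : ℝ)⁻¹| ≤ 1 := by
  have hinv : (Fintype.card X : ℝ)⁻¹ ≤ 1 := Nat.cast_inv_le_one _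
  have : 0 ≤ (Fintype.card X : ℝ)⁻¹ := by positivity
  rw [abs_le]
  split_ifs <;> constructor <;> linarith

theorem stmt15_general [DecidableEq α] [Nontrivial α] (hZ : IsBlockEnumeration Z) (w : Fin k → α) :
    Tendsto (fun m : ℕ => (#{i ∈ range m | factor Z k i = w} : ℝ) / m) atTop
      (𝓝 ((Fintype.card α ^ k : ℝ)⁻¹)) := by
  have hcard : (Fintype.card (Fin k → α) : ℝ) = Fintype.card α ^ k := by simp
  have hlittle := hZ.isLittleO_sum_factor (expect_indicator_sub_inv_card w)
    (abs_indicator_sub_inv_card_le_one w)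
  rw [← tendsto_sub_nhds_zero_iff]
  refine hlittle.tendsto_div_nhds_zero.congr' ?_
  filter_upwards [eventually_gt_atTop 0] with m hm
  have : (m : ℝ) ≠ 0 := by positivity
  rw [sum_sub_distrib, sum_boole, sum_const, card_range, nsmul_eq_mul, sub_div,
    mul_div_cancel_left₀ _ this, hcard]

end BlockEnumeration

section Lists

lemma take_drop_eq_iff {α : Type*} {w x : List α} {i : ℕ} (h : i + w.length ≤ x.length) :
    (x.drop i).take w.length = w ↔ ∀ j (hj : j < w.length), x[i + j] = w[j] := by
  constructor
  · intro heq j hj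
    simp [← List.getElem_of_eq heq (i := j) (by simp; lia)]
  · intro heq
    exact List.ext_getElem (by simp; lia) fun j _ hj => by simpa using heq j hj

lemma occ_map_range (Z : ℕ → Bool) (w : List Bool) (m : ℕ) :
    occ w ((List.range m).map Z)
      = #{i ∈ range (m + 1 - w.length) | factor Z w.length i = w.get} := by
  have hcard (x : List Bool) :
      occ w x = #{i ∈ range (x.length + 1 - w.length) | (x.drop i).take w.length = w} := rfl
  rw [hcard, List.length_map, List.length_range]
  refine congrArg card (filter_congr fun i hi => ?_)
  rw [mem_range] at hi
  rw [take_drop_eq_iff (by simp; lia)]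
  simp [factor, funext_iff, Fin.forall_iff]

lemma tendsto_occ_map_range_div {Z : ℕ → Bool} {w : List Bool} (hw : w ≠ []) {p : ℝ}
    (h : Tendsto (fun m : ℕ => (#{i ∈ range m | factor Z w.length i = w.get} : ℝ) / m) atTop
      (𝓝 p)) :
    Tendsto (fun m : ℕ => (occ w ((List.range m).map Z) : ℝ) / m) atTop (𝓝 p) := by
  refine h.congr_dist (squeeze_zero (fun _ => dist_nonneg) (fun m => ?_)
    (tendsto_const_div_atTop_nhds_zero_nat (w.length : ℝ)))
  have hpos : 1 ≤ w.length := List.length_pos_iff.2 hw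
  have hindicator (i : ℕ) : |if factor Z w.length i = w.get then (1 : ℝ) else 0| ≤ 1 := by
    split_ifs <;> simp
  have hle := abs_sum_range_sub_le hindicator (by lia : m + 1 - w.length ≤ m)
  have hlen : (m : ℝ) - (m + 1 - w.length : ℕ) ≤ w.length := by
    rw [sub_le_iff_le_add]
    exact_mod_cast (by lia : m ≤ w.length + (m + 1 - w.length))
  rw [Real.dist_eq, ← sub_div, abs_div, Nat.abs_cast, occ_map_range, ← sum_boole, ← sum_boole]
  gcongr
  exact hle.trans hlen

lemma exists_block_of_occB_pos {w x : List Bool} (h : 0 < occB w x) :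
    ∃ j, ∃ hj : j * w.length + w.length ≤ x.length,
      ∀ t (ht : t < w.length), x[j * w.length + t] = w[t] := by
  obtain ⟨i, hi⟩ := List.exists_mem_of_length_pos h
  simp only [List.mem_filter, List.mem_range, Bool.and_eq_true, decide_eq_true_eq] at hi
  obtain ⟨hlt, hmod, hw⟩ := hi
  obtain ⟨j, rfl⟩ := Nat.dvd_of_mod_eq_zero hmod
  rw [mul_comm] at hlt hw
  exact ⟨j, by lia, (take_drop_eq_iff (by lia)).1 hw⟩

lemma getD_flatten_map_range {α : Type*} (F : ℕ → List α) {n N t : ℕ} (hn : n < N)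
    (ht : t < (F n).length) (d : α) :
    ((List.range N).map F).flatten.getD (((List.range n).map F).flatten.length + t) d
      = (F n)[t] := by
  obtain ⟨r, rfl⟩ := Nat.exists_eq_add_of_lt hn
  rw [show n + r + 1 = n + 1 + r by ring, List.range_add, List.range_succ]
  simp only [List.map_append, List.flatten_append, List.append_assoc]
  rw [List.getD_append_right _ _ _ _ (Nat.le_add_right _ _), Nat.add_sub_cancel_left,
    List.getD_append _ _ _ _ (by simpa)]
  simp [ht]

variable {Z : ℕ → Bool} {Zn : ℕ → List Bool}

lemma length_flatten_stages (hlen : ∀ n, 1 ≤ n → (Zn n).length = n * 2 ^ n) (n : ℕ) :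
    ((List.range n).map fun r => Zn (r + 1)).flatten.length = stageStart id (2 ^ ·) (n + 1) := by
  induction n with
  | zero => simp [stageStart]
  | succ n ih =>
    rw [stageStart_succ, ← ih, List.range_succ]
    simp [hlen, mul_comm]

lemma apply_stageStart_add (hlen : ∀ n, 1 ≤ n → (Zn n).length = n * 2 ^ n)
    (hZ : ∀ i, Z i = ((List.range (i + 1)).map fun r => Zn (r + 1)).flatten.getD i false)
    {n t : ℕ} (hn : 1 ≤ n) (ht : t < (Zn n).length) :
    Z (stageStart id (2 ^ ·) n + t) = (Zn n)[t] := by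
  obtain ⟨n, rfl⟩ := Nat.exists_eq_add_of_le' hn
  have hstart : n ≤ stageStart id (2 ^ ·) (n + 1) := le_stageStart_succ one_le_two n
  rw [hZ]
  rw [← length_flatten_stages hlen] at hstart ⊢
  exact getD_flatten_map_range (fun r => Zn (r + 1)) (by lia) ht false

theorem isBlockEnumeration_of_occB_eq_one (hlen : ∀ n, 1 ≤ n → (Zn n).length = n * 2 ^ n)
    (henum : ∀ n, 1 ≤ n → ∀ w : List Bool, w.length = n → occB w (Zn n) = 1)
    (hZ : ∀ i, Z i = ((List.range (i + 1)).map fun r => Zn (r + 1)).flatten.getD i false) :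
    IsBlockEnumeration Z := by
  intro n hn
  rw [Fintype.card_bool, Fintype.bijective_iff_surjective_and_card]
  refine ⟨fun v => ?_, by simp⟩
  have hocc : 0 < occB (List.ofFn v) (Zn n) := by simp [henum n hn]
  obtain ⟨j, hle, hj⟩ := exists_block_of_occB_pos hocc
  simp only [List.length_ofFn, List.getElem_ofFn] at hle hj
  have hjlt : j < 2 ^ n := by
    rw [hlen n hn, ← Nat.succ_mul, mul_comm n] at hle
    exact Nat.le_of_mul_le_mul_right hle hn
  refine ⟨⟨j, hjlt⟩, funext fun t => ?_⟩
  simp only [factor, add_assoc]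
  rw [apply_stageStart_add hlen hZ hn (by lia), hj t t.2]

end Lists

/-- If `Z = Z_1 Z_2 Z_3 ⋯` where each `Z_n` has length `n·2^n` and is an enumeration of
all binary strings of length `n` in aligned blocks (`occ_B(w, Z_n) = 1` for all `w` of
length `n`), then `Z` is normal. -/
theorem stmt15 (Z : ℕ → Bool) (Zn : ℕ → List Bool)
    (hlen : ∀ n, 1 ≤ n → (Zn n).length = n * 2 ^ n)
    (henum : ∀ n, 1 ≤ n → ∀ w : List Bool, w.length = n → occB w (Zn n) = 1)
    (hZ : ∀ i : ℕ,
      Z i = (((List.range (i + 1)).map (fun k => Zn (k + 1))).flatten).getD i false)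
    (w : List Bool) (hw : w ≠ []) :
    Filter.Tendsto (fun m : ℕ => (occ w ((List.range m).map Z) : ℝ) / m)
      Filter.atTop (nhds ((2 ^ w.length : ℝ)⁻¹)) := by
  refine tendsto_occ_map_range_div hw ?_
  simpa using stmt15_general (isBlockEnumeration_of_occB_eq_one hlen henum hZ) w.get
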